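/- (Main theorem, low threshold rank case.) There exists a universal constant c > 0 such that the following holds. Let n ≥ 1, ε ∈ (0,1), let J : Fin n → Fin n → ℝ be symmetric and regular with Σ_j |J i j| = J' > 0 for every i, let A be the matrix A i j = |J i j|/J', let rank(τ) be the number of eigenvalues of A (with multiplicity) that are ≥ τ, and set t = ⌈rank(c·ε²)/(c·ε²)⌉. Let Z = Σ_{x ∈ {-1,1}^n} exp(Σ_{i,j} J i j · x i · x j), and let V be the supremum, over all level-(t+2) Lasserre solutions (μ_S, v_{S,α}) on Fin n, of Σ_{i,j} J i j · E_{μ_{{i,j}}}[x i · x j] + min over S ⊆ Fin n with |S| ≤ t of [ H(μ_S) + Σ_{i ∉ S} H(μ_i | μ_S) ]. Then log Z ≤ V ≤ log Z + ε·n·J'. -/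

import Mathlib

/-!
For the upper bound, condition on a set `S` and round: sample `x_S` from `μ_S` and the other
coordinates independently from their conditional laws. The rounded distribution has entropy
`H(μ_S) + Σ_{i ∉ S} H(μ_i | μ_S)`, so by Gibbs' inequality the value exceeds `log Z` by at most the
averaged conditional covariances given `S`, summed along the edges.

The set `S` is built greedily. Conditioning on one more coordinate `j` raises the potential
`Σ_i E[E[x_i | x_S]²]`, which never exceeds `n`, by at least the `j`-th column sum of the matrix
`N` of averaged squared conditional covariances. By Cauchy–Schwarz, average covariance above `ε`
along the edges forces `tr (A N) > ε² n`. The Lasserre vectors make the conditional covariance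
matrices Gram matrices, so `N` is positive semidefinite by the Schur product theorem, and
expanding in an eigenbasis of `A` gives `tr (A N) ≤ rank(τ) · max_j Σ_i N i j + τ · tr N` with
`tr N ≤ n`. Hence some column sum is at least `(ε² - τ) n / rank(τ)`, and this can happen only
about `rank(τ) / (ε² - τ)` times.

For the lower bound, the Gibbs measure itself gives a Lasserre solution, and its entropy is at most
its cross-entropy relative to each of its rounded distributions, that is, its pseudo-entropy.
-/

open scoped BigOperators

noncomputable section

/-- The set `{-1, 1}` of spin values. -/
abbrev B : Finset ℝ := {-1, 1}

/-- The discrete cube `{-1,1}^n`. -/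
abbrev Cube (n : ℕ) := Fin n → ↥B

/-- Assignments of spin values to the coordinates in `S`. -/
abbrev Asg {n : ℕ} (S : Finset (Fin n)) := ↥S → ↥B

/-- Shannon entropy (in nats), with the convention `0 * log 0 = 0`. -/
def ent {D : Type*} [Fintype D] (p : D → ℝ) : ℝ := -∑ d, p d * Real.log (p d)

/-- Restriction of an assignment on `S` to a subset `R ⊆ S`. -/
def res {n : ℕ} {R S : Finset (Fin n)} (h : R ⊆ S) (y : Asg S) : Asg R :=
  fun i => y ⟨i.1, h i.2⟩

/-- The marginal on `R ⊆ S` of a local distribution on assignments to `S`. -/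
def margTo {n : ℕ} {S : Finset (Fin n)} (μ : Asg S → ℝ) {R : Finset (Fin n)}
    (h : R ⊆ S) (z : Asg R) : ℝ :=
  ∑ y : Asg S, if res h y = z then μ y else 0

/-- A level-`k` Sherali–Adams consistent family on `Fin n`: local distributions
`μ_S` over assignments to each `S ⊆ Fin n` with `|S| ≤ k`, nonnegative, summing
to `1`, and consistent on intersections whenever `|S ∪ T| ≤ k`. -/
structure SAFamily (n k : ℕ) where
  μ : (S : Finset (Fin n)) → Asg S → ℝ
  nonneg : ∀ S : Finset (Fin n), S.card ≤ k → ∀ y : Asg S, 0 ≤ μ S y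
  sum_one : ∀ S : Finset (Fin n), S.card ≤ k → ∑ y : Asg S, μ S y = 1
  consistent : ∀ S T : Finset (Fin n), (S ∪ T).card ≤ k → ∀ z : Asg (S ∩ T),
    margTo (μ S) Finset.inter_subset_left z = margTo (μ T) Finset.inter_subset_right z

/-- Extension of an assignment on `S` to `insert i S` with value `a` at `i`. -/
def extAsg {n : ℕ} {S : Finset (Fin n)} (i : Fin n) (y : Asg S) (a : ↥B) :
    Asg (insert i S) :=
  fun j => if h : j.1 = i then a else
    y ⟨j.1, by
      rcases Finset.mem_insert.mp j.2 with h' | h'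
      · exact absurd h' h
      · exact h'⟩

/-- The conditional entropy `H(μ_i | μ_S)` computed from the local distributions
`μ_{S∪{i}}` and `μ_S` of an SA family (terms with `μ_S(x_S) = 0` contribute `0`). -/
def condEnt {n k : ℕ} (F : SAFamily n k) (S : Finset (Fin n)) (i : Fin n) : ℝ :=
  ∑ y : Asg S, F.μ S y *
    ent (fun a : ↥B => F.μ (insert i S) (extAsg i y a) / F.μ S y)

/-- The pairwise correlation `E_{μ_{{i,j}}}[x_i x_j]` of an SA family. -/
def pairExp {n k : ℕ} (F : SAFamily n k) (i j : Fin n) : ℝ :=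
  ∑ y : Asg ({i, j} : Finset (Fin n)),
    F.μ {i, j} y * (y ⟨i, by simp⟩ : ℝ) * (y ⟨j, by simp⟩ : ℝ)

/-- The augmented mean-field pseudo-entropy of an SA family at level `k'`:
`min_{|S| ≤ k'} [ H(μ_S) + Σ_{i ∉ S} H(μ_i | μ_S) ]`. -/
def pseudoEnt {n k : ℕ} (F : SAFamily n k) (k' : ℕ) : ℝ :=
  (Finset.univ.filter (fun S : Finset (Fin n) => S.card ≤ k')).inf'
    ⟨∅, Finset.mem_filter.mpr ⟨Finset.mem_univ _, by simp⟩⟩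
    (fun S => ent (F.μ S) + ∑ i ∈ Sᶜ, condEnt F S i)

/-- The total interaction strength `J_T = Σ_{i,j} |J i j|`. -/
def JT {n : ℕ} (J : Fin n → Fin n → ℝ) : ℝ := ∑ i : Fin n, ∑ j : Fin n, |J i j|

/-- `E[x_i | x_S]`, computed from `μ_{S∪{i}}` and `μ_S`
(equal to `0` when `μ_S(x_S) = 0`, since `·/0 = 0` in `ℝ`). -/
def condExp1 {n k : ℕ} (F : SAFamily n k) (S : Finset (Fin n)) (y : Asg S) (i : Fin n) : ℝ :=
  (∑ z : Asg (S ∪ {i}), if res Finset.subset_union_left z = y then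
      F.μ (S ∪ {i}) z * (z ⟨i, by simp⟩ : ℝ) else 0) / F.μ S y

/-- `E[x_i x_j | x_S]`, computed from `μ_{S∪{i,j}}` and `μ_S`. -/
def condExp2 {n k : ℕ} (F : SAFamily n k) (S : Finset (Fin n)) (y : Asg S) (i j : Fin n) : ℝ :=
  (∑ z : Asg (S ∪ {i, j}), if res Finset.subset_union_left z = y then
      F.μ (S ∪ {i, j}) z * (z ⟨i, by simp⟩ : ℝ) * (z ⟨j, by simp⟩ : ℝ) else 0) / F.μ S y

/-- `Σ_{x_S} μ_S(x_S) ( E[x_i x_j | x_S] − E[x_i | x_S] E[x_j | x_S] )`: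
the average conditional covariance of coordinates `i, j` given `S`. -/
def condCov {n k : ℕ} (F : SAFamily n k) (S : Finset (Fin n)) (i j : Fin n) : ℝ :=
  ∑ y : Asg S, F.μ S y * (condExp2 F S y i j - condExp1 F S y i * condExp1 F S y j)

open scoped RealInnerProductSpace

/-- A level-`k` Lasserre solution on `Fin n`: a level-`k` Sherali–Adams
consistent family together with vectors `v_{S,α}` in a finite-dimensional real
inner product space whose inner products realize the joint local probabilities:
`⟪v_{S,α}, v_{T,β}⟫ = Pr_{μ_{S∪T}}[x_S = α ∧ x_T = β]` whenever `|S ∪ T| ≤ k`. -/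
structure LasserreSol (n k : ℕ) extends SAFamily n k where
  dim : ℕ
  vec : (S : Finset (Fin n)) → Asg S → EuclideanSpace ℝ (Fin dim)
  inner_eq : ∀ S T : Finset (Fin n), (S ∪ T).card ≤ k →
    ∀ (α : Asg S) (β : Asg T),
      ⟪vec S α, vec T β⟫ = ∑ y : Asg (S ∪ T),
        if res Finset.subset_union_left y = α ∧ res Finset.subset_union_right y = β
        then toSAFamily.μ (S ∪ T) y else 0

/-- The `τ`-threshold rank of a Hermitian (real symmetric) matrix `A`: the number
of eigenvalues of `A`, counted with multiplicity, that are at least `τ`. -/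
def thresholdRank {n : ℕ} {A : Matrix (Fin n) (Fin n) ℝ} (hA : A.IsHermitian)
    (τ : ℝ) : ℕ :=
  (Finset.univ.filter (fun i : Fin n => τ ≤ hA.eigenvalues i)).card

section Spectral

open scoped Matrix

variable {ι : Type*} [Fintype ι] {A N : Matrix ι ι ℝ} {d : ℝ}

theorem dotProduct_mulVec_le_of_sum_le (hN : N.IsHermitian) (hN0 : ∀ i j, 0 ≤ N i j)
    (hd : ∀ i, ∑ j, N i j ≤ d) (u : ι → ℝ) : u ⬝ᵥ N *ᵥ u ≤ d * (u ⬝ᵥ u) := by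
  have hswap : ∑ i, ∑ j, N i j * (u j * u j) = ∑ i, ∑ j, N i j * (u i * u i) := by
    rw [Finset.sum_comm]
    exact Finset.sum_congr rfl fun i _ => Finset.sum_congr rfl fun j _ => by
      rw [← hN.apply j i, star_trivial]
  have hrow : ∑ i, ∑ j, N i j * (u i * u i) ≤ d * (u ⬝ᵥ u) := by
    rw [dotProduct, Finset.mul_sum]
    refine Finset.sum_le_sum fun i _ => ?_
    rw [← Finset.sum_mul]
    exact mul_le_mul_of_nonneg_right (hd i) (mul_self_nonneg _)
  calc u ⬝ᵥ N *ᵥ u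
      = ∑ i, ∑ j, N i j * (u i * u j) := by
        simp only [dotProduct, Matrix.mulVec, Finset.mul_sum]
        exact Finset.sum_congr rfl fun i _ => Finset.sum_congr rfl fun j _ => by ring
    _ ≤ ∑ i, ∑ j, (N i j * (u i * u i) + N i j * (u j * u j)) / 2 := by
        gcongr with i _ j _
        nlinarith [mul_nonneg (hN0 i j) (sq_nonneg (u i - u j))]
    _ = ∑ i, ∑ j, N i j * (u i * u i) := by
        simp only [← Finset.sum_div, Finset.sum_add_distrib, hswap]
        ring
    _ ≤ d * (u ⬝ᵥ u) := hrow

theorem trace_eq_sum_dotProduct_mulVec (b : OrthonormalBasis ι ℝ (EuclideanSpace ℝ ι))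
    (N : Matrix ι ι ℝ) : N.trace = ∑ k, b k ⬝ᵥ N *ᵥ b k := by
  classical
  have h := LinearMap.trace_eq_sum_inner N.toEuclideanLin b
  rw [Matrix.toEuclideanLin_eq_toLin_orthonormal, Matrix.trace_toLin_eq,
    ← Matrix.toEuclideanLin_eq_toLin_orthonormal] at h
  simpa [EuclideanSpace.inner_eq_star_dotProduct, dotProduct_comm] using h

variable [DecidableEq ι]

theorem eigenvectorBasis_dotProduct_self (hA : A.IsHermitian) (k : ι) :
    hA.eigenvectorBasis k ⬝ᵥ hA.eigenvectorBasis k = (1 : ℝ) := by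
  have h := hA.eigenvectorBasis.orthonormal.1 k
  rw [EuclideanSpace.norm_eq, Real.sqrt_eq_one] at h
  simpa [dotProduct, sq] using h

theorem eigenvalues_le_of_sum_le (hA : A.IsHermitian) (hA0 : ∀ i j, 0 ≤ A i j)
    (hd : ∀ i, ∑ j, A i j ≤ d) (k : ι) : hA.eigenvalues k ≤ d := by
  have h := dotProduct_mulVec_le_of_sum_le hA hA0 hd (hA.eigenvectorBasis k)
  rwa [eigenvectorBasis_dotProduct_self, mul_one, hA.mulVec_eigenvectorBasis, dotProduct_smul,
    eigenvectorBasis_dotProduct_self, smul_eq_mul, mul_one] at h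

theorem trace_mul_eq_sum_eigenvalues_mul (hA : A.IsHermitian) (N : Matrix ι ι ℝ) :
    (A * N).trace =
      ∑ k, hA.eigenvalues k * (hA.eigenvectorBasis k ⬝ᵥ N *ᵥ hA.eigenvectorBasis k) := by
  rw [Matrix.trace_mul_comm, trace_eq_sum_dotProduct_mulVec hA.eigenvectorBasis]
  refine Finset.sum_congr rfl fun k _ => ?_
  rw [← Matrix.mulVec_mulVec, hA.mulVec_eigenvectorBasis, Matrix.mulVec_smul, dotProduct_smul,
    smul_eq_mul]

/-- Eigenvalues are at most `1`, so those above `τ` contribute at most `d` each by the Schur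
test, and the others at most `τ` times their share of the trace. -/
theorem trace_mul_le_card_mul_add (hA : A.IsHermitian) (hA0 : ∀ i j, 0 ≤ A i j)
    (hA1 : ∀ i, ∑ j, A i j ≤ 1) (hN : N.PosSemidef) (hN0 : ∀ i j, 0 ≤ N i j)
    (hd : ∀ i, ∑ j, N i j ≤ d) {τ : ℝ} (hτ : 0 ≤ τ) :
    (A * N).trace ≤ (Finset.univ.filter fun k => τ ≤ hA.eigenvalues k).card * d + τ * N.trace := by
  set q := fun k => hA.eigenvectorBasis k ⬝ᵥ N *ᵥ hA.eigenvectorBasis k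
  have hq0 : ∀ k, 0 ≤ q k := fun k => by simpa using hN.dotProduct_mulVec_nonneg _
  have hqd : ∀ k, q k ≤ d := fun k => by
    simpa [eigenvectorBasis_dotProduct_self] using
      dotProduct_mulVec_le_of_sum_le hN.isHermitian hN0 hd (hA.eigenvectorBasis k)
  have hterm : ∀ k, hA.eigenvalues k * q k ≤
      (if τ ≤ hA.eigenvalues k then d else 0) + τ * q k := fun k => by
    split_ifs with hk
    · nlinarith [mul_le_mul_of_nonneg_right (eigenvalues_le_of_sum_le hA hA0 hA1 k) (hq0 k),
        hqd k, mul_nonneg hτ (hq0 k)]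
    · rw [zero_add]
      exact mul_le_mul_of_nonneg_right (not_le.mp hk).le (hq0 k)
  rw [trace_mul_eq_sum_eigenvalues_mul hA,
    trace_eq_sum_dotProduct_mulVec hA.eigenvectorBasis N]
  refine (Finset.sum_le_sum fun k _ => hterm k).trans_eq ?_
  rw [Finset.sum_add_distrib, ← Finset.mul_sum, ← Finset.sum_filter, Finset.sum_const,
    nsmul_eq_mul]

end Spectral

section Entropy

variable {ι : Type*} [Fintype ι] {p w : ι → ℝ}

theorem sum_mul_log_add_ent_le (hp : ∀ i, 0 ≤ p i) (hp1 : ∑ i, p i = 1) (hw : ∀ i, 0 ≤ w i)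
    (hpw : ∀ i, p i ≠ 0 → w i ≠ 0) :
    ∑ i, p i * Real.log (w i) + ent p ≤ Real.log (∑ i, w i) := by
  obtain ⟨i₀, hi₀⟩ : ∃ i, p i ≠ 0 := by
    by_contra! h
    simp [h] at hp1
  have hW : 0 < ∑ i, w i :=
    Finset.sum_pos' (fun i _ => hw i) ⟨i₀, Finset.mem_univ _, (hw i₀).lt_of_ne' (hpw i₀ hi₀)⟩
  set W := ∑ i, w i with hWdef
  have hterm : ∀ i, p i * (Real.log (w i) - Real.log (p i) - Real.log W) ≤ w i / W - p i := by
    intro i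
    rcases (hp i).eq_or_lt with h0 | hpos
    · simpa [← h0] using div_nonneg (hw i) hW.le
    have hwi : 0 < w i := (hw i).lt_of_ne' (hpw i hpos.ne')
    have hlog := Real.log_le_sub_one_of_pos (div_pos hwi (mul_pos hpos hW))
    rw [Real.log_div hwi.ne' (mul_pos hpos hW).ne', Real.log_mul hpos.ne' hW.ne'] at hlog
    calc p i * (Real.log (w i) - Real.log (p i) - Real.log W)
        ≤ p i * (w i / (p i * W) - 1) := mul_le_mul_of_nonneg_left (by linarith) hpos.le
      _ = w i / W - p i := by field_simp
  have hsum := Finset.sum_le_sum fun i (_ : i ∈ Finset.univ) => hterm i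
  simp only [mul_sub, Finset.sum_sub_distrib, ← Finset.sum_mul, ← Finset.sum_div, hp1,
    ← hWdef, div_self hW.ne'] at hsum
  rw [ent]
  linarith

end Entropy

theorem sum_prod_mul_prod {ι α R : Type*} [Fintype ι] [DecidableEq ι] [Fintype α]
    [CommSemiring R] {q : ι → α → R} (hq : ∀ i, ∑ a, q i a = 1) (s : Finset ι) (g : ι → α → R) :
    ∑ x : ι → α, (∏ i, q i (x i)) * ∏ i ∈ s, g i (x i) = ∏ i ∈ s, ∑ a, q i a * g i a := by
  calc ∑ x : ι → α, (∏ i, q i (x i)) * ∏ i ∈ s, g i (x i)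
      = ∑ x : ι → α, ∏ i, q i (x i) * (if i ∈ s then g i (x i) else 1) := by
        simp only [Finset.prod_mul_distrib, Finset.prod_ite_mem, Finset.univ_inter]
    _ = ∏ i, ∑ a, q i a * (if i ∈ s then g i a else 1) := by
        rw [Finset.prod_univ_sum, Fintype.piFinset_univ]
    _ = ∏ i ∈ s, ∑ a, q i a * g i a := by
        rw [← Finset.prod_subset (Finset.subset_univ s) fun i _ hi => by simp [hi, hq]]
        exact Finset.prod_congr rfl fun i hi => by simp only [hi, if_true]

theorem exists_card_le_of_potential {α : Type*} [DecidableEq α] {Φ : Finset α → ℝ} {δ : ℝ}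
    {t : ℕ} {P : Finset α → Prop} (h0 : 0 ≤ Φ ∅)
    (hle : ∀ S : Finset α, S.card ≤ t + 1 → Φ S ≤ (t + 1) * δ)
    (hstep : ∀ S : Finset α, S.card ≤ t → ¬ P S → ∃ j, Φ S + δ < Φ (insert j S)) :
    ∃ S : Finset α, S.card ≤ t ∧ P S := by
  by_contra! hP
  have hgrow : ∀ m ≤ t, ∃ S : Finset α, S.card ≤ m + 1 ∧ (m + 1) * δ < Φ S := by
    intro m
    induction m with
    | zero =>
      intro _
      obtain ⟨j, hj⟩ := hstep ∅ (by simp) (hP ∅ (by simp))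
      exact ⟨insert j ∅, by simp, by push_cast; linarith⟩
    | succ m ih =>
      intro hm
      obtain ⟨S, hcard, hS⟩ := ih (by omega)
      obtain ⟨j, hj⟩ := hstep S (by omega) (hP S (by omega))
      exact ⟨insert j S, (Finset.card_insert_le j S).trans (by omega), by push_cast; linarith⟩
  obtain ⟨S, hcard, hS⟩ := hgrow t le_rfl
  exact (hle S hcard).not_gt hS

section FiniteProbability

variable {Ω α β : Type*} [Fintype Ω] [DecidableEq α] [DecidableEq β]

/-- The push-forward along `r` of a weight function `f` on a finite type. Keeping the map `r`
arbitrary covers all restriction maps between assignments at once. -/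
def fiberSum (r : Ω → α) (f : Ω → ℝ) (a : α) : ℝ := ∑ ω, if r ω = a then f ω else 0

/-- The conditional expectation `E[X | r = a]` under the weights `p`, equal to `0` when the
event `r = a` has weight `0`. -/
def fiberMean (p : Ω → ℝ) (r : Ω → α) (X : Ω → ℝ) (a : α) : ℝ :=
  fiberSum r (fun ω => p ω * X ω) a / fiberSum r p a

/-- The conditional covariance `Cov(X, Y | r = a)` under the weights `p`. -/
def fiberCov (p : Ω → ℝ) (r : Ω → α) (X Y : Ω → ℝ) (a : α) : ℝ :=
  fiberMean p r (fun ω => X ω * Y ω) a - fiberMean p r X a * fiberMean p r Y a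

/-- The conditional probability `P(X = b | r = a)` under the weights `p`. -/
def fiberLaw (p : Ω → ℝ) (r : Ω → α) (X : Ω → β) (a : α) (b : β) : ℝ :=
  fiberMean p r (fun ω => if X ω = b then 1 else 0) a

variable {p : Ω → ℝ} {r : Ω → α}

theorem sum_fiberSum_mul [Fintype α] (r : Ω → α) (f : Ω → ℝ) (g : α → ℝ) :
    ∑ a, fiberSum r f a * g a = ∑ ω, f ω * g (r ω) := by
  simp only [fiberSum, Finset.sum_mul, ite_mul, zero_mul]
  rw [Finset.sum_comm]
  exact Finset.sum_congr rfl fun ω _ => by simp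

theorem fiberSum_mul_comp (r : Ω → α) (f : Ω → ℝ) (g : α → ℝ) (a : α) :
    fiberSum r (fun ω => f ω * g (r ω)) a = fiberSum r f a * g a := by
  simp only [fiberSum, Finset.sum_mul, ite_mul, zero_mul]
  exact Finset.sum_congr rfl fun ω _ => by split_ifs with h <;> simp [h]

theorem fiberSum_comp [Fintype β] (s : Ω → β) (π : β → α) (f : Ω → ℝ) :
    fiberSum (fun ω => π (s ω)) f = fiberSum π (fiberSum s f) := by
  funext a
  simpa [fiberSum] using (sum_fiberSum_mul s f fun b => if π b = a then 1 else 0).symm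

theorem fiberSum_nonneg {f : Ω → ℝ} (hf : ∀ ω, 0 ≤ f ω) (a : α) : 0 ≤ fiberSum r f a :=
  Finset.sum_nonneg fun ω _ => by split_ifs <;> simp [hf]

theorem eq_zero_of_fiberSum_eq_zero (hp : ∀ ω, 0 ≤ p ω) {ω : Ω} (h : fiberSum r p (r ω) = 0) :
    p ω = 0 := by
  simpa using (Finset.sum_eq_zero_iff_of_nonneg fun ω' _ => by split_ifs <;> simp [hp]).mp h ω
    (Finset.mem_univ ω)

theorem fiberSum_mul_fiberMean (hp : ∀ ω, 0 ≤ p ω) (X : Ω → ℝ) (a : α) :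
    fiberSum r p a * fiberMean p r X a = fiberSum r (fun ω => p ω * X ω) a := by
  by_cases h : fiberSum r p a = 0
  · rw [h, zero_mul, fiberSum, Finset.sum_eq_zero fun ω _ => ?_]
    split_ifs with hω
    · rw [eq_zero_of_fiberSum_eq_zero hp (hω ▸ h), zero_mul]
    · rfl
  · exact mul_div_cancel₀ _ h

theorem sum_fiberSum_mul_fiberMean [Fintype α] (hp : ∀ ω, 0 ≤ p ω) (X : Ω → ℝ) (g : α → ℝ) :
    ∑ a, fiberSum r p a * (fiberMean p r X a * g a) = ∑ ω, p ω * (X ω * g (r ω)) := by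
  simp only [← mul_assoc, fiberSum_mul_fiberMean hp, sum_fiberSum_mul]

theorem fiberMean_eq_sum (p : Ω → ℝ) (r : Ω → α) (X : Ω → ℝ) (a : α) :
    fiberMean p r X a = ∑ ω, (if r ω = a then p ω else 0) / fiberSum r p a * X ω := by
  rw [fiberMean, fiberSum, Finset.sum_div]
  exact Finset.sum_congr rfl fun ω _ => by split_ifs <;> ring

theorem fiberMean_mono (hp : ∀ ω, 0 ≤ p ω) {X Y : Ω → ℝ} (h : ∀ ω, X ω ≤ Y ω) (a : α) :
    fiberMean p r X a ≤ fiberMean p r Y a :=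
  div_le_div_of_nonneg_right
    (Finset.sum_le_sum fun ω _ => by
      split_ifs
      exacts [mul_le_mul_of_nonneg_left (h ω) (hp ω), le_rfl])
    (fiberSum_nonneg hp a)

theorem fiberMean_nonneg (hp : ∀ ω, 0 ≤ p ω) {X : Ω → ℝ} (h : ∀ ω, 0 ≤ X ω) (a : α) :
    0 ≤ fiberMean p r X a :=
  div_nonneg (fiberSum_nonneg (fun ω => mul_nonneg (hp ω) (h ω)) a) (fiberSum_nonneg hp a)

theorem fiberMean_const (c : ℝ) {a : α} (ha : fiberSum r p a ≠ 0) :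
    fiberMean p r (fun _ => c) a = c := by
  rw [fiberMean, fiberSum_mul_comp r p fun _ => c, mul_div_cancel_left₀ _ ha]

theorem fiberMean_le_one (hp : ∀ ω, 0 ≤ p ω) {X : Ω → ℝ} (h : ∀ ω, X ω ≤ 1) (a : α) :
    fiberMean p r X a ≤ 1 := by
  refine (fiberMean_mono hp h a).trans ?_
  simpa [fiberMean] using div_self_le_one (fiberSum r p a)

theorem fiberMean_comp [Fintype β] (p : Ω → ℝ) (s : Ω → β) (π : β → α) (Z : β → ℝ) :
    fiberMean p (fun ω => π (s ω)) (fun ω => Z (s ω)) = fiberMean (fiberSum s p) π Z := by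
  funext a
  simp only [fiberMean, fiberSum_comp, ← fiberSum_mul_comp]

theorem fiberMean_fiberMean_mul [Fintype β] (hp : ∀ ω, 0 ≤ p ω) (s : Ω → β) (π : β → α)
    (X : Ω → ℝ) (Z : β → ℝ) :
    fiberMean (fiberSum s p) π (fun b => fiberMean p s X b * Z b) =
      fiberMean p (fun ω => π (s ω)) (fun ω => X ω * Z (s ω)) := by
  have hnum : (fun b => fiberSum s p b * (fiberMean p s X b * Z b)) =
      fiberSum s fun ω => p ω * (X ω * Z (s ω)) := by
    funext b
    simp only [← mul_assoc]
    rw [fiberSum_mul_fiberMean hp, fiberSum_mul_comp]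
  funext a
  rw [fiberMean, fiberMean, hnum, ← fiberSum_comp, ← fiberSum_comp]

theorem fiberMean_sub_mul_sub (p : Ω → ℝ) (r : Ω → α) (X Y : Ω → ℝ) (a : α) :
    fiberMean p r (fun ω => (X ω - fiberMean p r X a) * (Y ω - fiberMean p r Y a)) a =
      fiberCov p r X Y a := by
  by_cases ha : fiberSum r p a = 0
  · simp [fiberCov, fiberMean, ha]
  have hone := fiberMean_const (p := p) (r := r) 1 ha
  set m := fiberMean p r X a with hm
  set m' := fiberMean p r Y a with hm'
  have hexpand : fiberMean p r (fun ω => (X ω - m) * (Y ω - m')) a =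
      fiberMean p r (fun ω => X ω * Y ω) a - m' * fiberMean p r X a - m * fiberMean p r Y a +
        m * m' * fiberMean p r (fun _ => 1) a := by
    simp only [fiberMean_eq_sum, Finset.mul_sum, ← Finset.sum_sub_distrib,
      ← Finset.sum_add_distrib]
    exact Finset.sum_congr rfl fun ω _ => by ring
  rw [hexpand, fiberCov, hone, ← hm, ← hm']
  ring

theorem fiberCov_self_nonneg (hp : ∀ ω, 0 ≤ p ω) (X : Ω → ℝ) (a : α) :
    0 ≤ fiberCov p r X X a := by
  rw [← fiberMean_sub_mul_sub]
  exact fiberMean_nonneg hp (fun ω => mul_self_nonneg _) a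

theorem fiberMean_mul_sq_le (hp : ∀ ω, 0 ≤ p ω) (X Y : Ω → ℝ) (a : α) :
    fiberMean p r (fun ω => X ω * Y ω) a ^ 2 ≤
      fiberMean p r (fun ω => X ω * X ω) a * fiberMean p r (fun ω => Y ω * Y ω) a := by
  simp only [fiberMean_eq_sum]
  have hw : ∀ ω, 0 ≤ (if r ω = a then p ω else 0) / fiberSum r p a := fun ω =>
    div_nonneg (by split_ifs <;> simp [hp]) (fiberSum_nonneg hp a)
  exact Finset.sum_sq_le_sum_mul_sum_of_sq_le_mul _
    (fun ω _ => mul_nonneg (hw ω) (mul_self_nonneg _))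
    (fun ω _ => mul_nonneg (hw ω) (mul_self_nonneg _)) fun ω _ => le_of_eq (by ring)

theorem fiberCov_sq_le_mul (hp : ∀ ω, 0 ≤ p ω) (X Y : Ω → ℝ) (a : α) :
    fiberCov p r X Y a ^ 2 ≤ fiberCov p r X X a * fiberCov p r Y Y a := by
  simp only [← fiberMean_sub_mul_sub]
  exact fiberMean_mul_sq_le hp _ _ a

theorem fiberCov_self_le_one (hp : ∀ ω, 0 ≤ p ω) {X : Ω → ℝ} (hX : ∀ ω, X ω * X ω ≤ 1) (a : α) :
    fiberCov p r X X a ≤ 1 :=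
  (sub_le_self _ (mul_self_nonneg _)).trans (fiberMean_le_one hp hX a)

theorem fiberCov_sq_le (hp : ∀ ω, 0 ≤ p ω) (X : Ω → ℝ) {Y : Ω → ℝ}
    (hY : ∀ ω, Y ω * Y ω ≤ 1) (a : α) : fiberCov p r X Y a ^ 2 ≤ fiberCov p r X X a :=
  (fiberCov_sq_le_mul hp X Y a).trans
    (mul_le_of_le_one_right (fiberCov_self_nonneg hp X a) (fiberCov_self_le_one hp hY a))

/-- The law of total variance, with the variance of `E[X | s]` bounded below by a squared
covariance. -/
theorem sum_fiberMean_sq_add_fiberCov_sq_le [Fintype α] [Fintype β] (hp : ∀ ω, 0 ≤ p ω)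
    (s : Ω → β) (π : β → α) (X : Ω → ℝ) {Z : β → ℝ} (hZ : ∀ b, Z b * Z b ≤ 1) :
    ∑ a, fiberSum (fun ω => π (s ω)) p a * (fiberMean p (fun ω => π (s ω)) X a ^ 2 +
        fiberCov p (fun ω => π (s ω)) X (fun ω => Z (s ω)) a ^ 2) ≤
      ∑ b, fiberSum s p b * fiberMean p s X b ^ 2 := by
  have hq : ∀ b, 0 ≤ fiberSum s p b := fiberSum_nonneg hp
  have hmean : fiberMean (fiberSum s p) π (fiberMean p s X) = fiberMean p (fun ω => π (s ω)) X := by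
    simpa using fiberMean_fiberMean_mul hp s π X fun _ => 1
  have hcov : fiberCov p (fun ω => π (s ω)) X (fun ω => Z (s ω)) =
      fiberCov (fiberSum s p) π (fiberMean p s X) Z := by
    funext a
    simp only [fiberCov, fiberMean_fiberMean_mul hp, hmean, fiberMean_comp]
  calc _ ≤ ∑ a, fiberSum π (fiberSum s p) a *
        (fiberMean (fiberSum s p) π (fun b => fiberMean p s X b * fiberMean p s X b) a * 1) := by
        rw [fiberSum_comp, hcov, ← hmean]
        refine Finset.sum_le_sum fun a _ => mul_le_mul_of_nonneg_left ?_ (fiberSum_nonneg hq a)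
        have h := fiberCov_sq_le hq (r := π) (fiberMean p s X) hZ a
        rw [fiberCov.eq_def (X := fiberMean p s X) (Y := fiberMean p s X)] at h
        linarith
    _ = ∑ b, fiberSum s p b * fiberMean p s X b ^ 2 := by
        rw [sum_fiberSum_mul_fiberMean hq]
        simp only [mul_one, sq]

theorem fiberLaw_nonneg (hp : ∀ ω, 0 ≤ p ω) (X : Ω → β) (a : α) (b : β) :
    0 ≤ fiberLaw p r X a b :=
  fiberMean_nonneg hp (fun ω => by split_ifs <;> simp) a

theorem fiberLaw_ne_zero (hp : ∀ ω, 0 ≤ p ω) (X : Ω → β) {ω : Ω} (hω : p ω ≠ 0) :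
    fiberLaw p r X (r ω) (X ω) ≠ 0 := by
  refine div_ne_zero (fun h => hω ?_) (mt (eq_zero_of_fiberSum_eq_zero hp) hω)
  simpa using eq_zero_of_fiberSum_eq_zero (p := fun ω' => p ω' * if X ω' = X ω then 1 else 0)
    (fun ω' => mul_nonneg (hp ω') (by split_ifs <;> simp)) h

theorem sum_fiberLaw_mul [Fintype β] (p : Ω → ℝ) (r : Ω → α) (X : Ω → β) (a : α) (g : β → ℝ) :
    ∑ b, fiberLaw p r X a b * g b = fiberMean p r (fun ω => g (X ω)) a := by
  simp only [fiberLaw, fiberMean_eq_sum, Finset.sum_mul]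
  rw [Finset.sum_comm]
  exact Finset.sum_congr rfl fun ω _ => by simp

theorem sum_fiberLaw [Fintype β] (X : Ω → β) {a : α} (ha : fiberSum r p a ≠ 0) :
    ∑ b, fiberLaw p r X a b = 1 := by
  simpa [fiberMean_const _ ha] using sum_fiberLaw_mul p r X a fun _ => 1

theorem fiberLaw_comp_self (X : α → β) {a : α} (ha : fiberSum r p a ≠ 0) (b : β) :
    fiberLaw p r (fun ω => X (r ω)) a b = if X a = b then 1 else 0 := by
  rw [fiberLaw, fiberMean, fiberSum_mul_comp r p fun a => if X a = b then 1 else 0,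
    mul_div_cancel_left₀ _ ha]

theorem sum_fiberSum_mul_sum_fiberLaw_mul [Fintype α] [Fintype β] (hp : ∀ ω, 0 ≤ p ω)
    (X : Ω → β) (g : α → β → ℝ) :
    ∑ a, fiberSum r p a * ∑ b, fiberLaw p r X a b * g a b = ∑ ω, p ω * g (r ω) (X ω) := by
  simp only [sum_fiberLaw_mul, fiberSum_mul_fiberMean hp]
  simp only [fiberSum]
  rw [Finset.sum_comm]
  exact Finset.sum_congr rfl fun ω _ => by simp

end FiniteProbability

section Assignments

variable {n : ℕ} {S : Finset (Fin n)} {i : Fin n}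

/-- The spin of the coordinate `i ∈ S` in an assignment on `S`, as a real number. -/
def spin (hi : i ∈ S) (z : Asg S) : ℝ := z ⟨i, hi⟩

theorem coe_mul_self_eq_one (a : ↥B) : (a : ℝ) * a = 1 := by
  have h := a.2
  simp only [Finset.mem_insert, Finset.mem_singleton] at h
  rcases h with h | h <;> simp [h]

theorem spin_mul_self (hi : i ∈ S) (z : Asg S) : spin hi z * spin hi z = 1 :=
  coe_mul_self_eq_one _

theorem extAsg_eq_iff (hi : i ∉ S) {y : Asg S} {a : ↥B} {z : Asg (insert i S)} :
    extAsg i y a = z ↔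
      res (Finset.subset_insert i S) z = y ∧ z ⟨i, Finset.mem_insert_self i S⟩ = a := by
  constructor
  · rintro rfl
    refine ⟨funext fun l => ?_, by simp [extAsg]⟩
    have hl : l.1 ≠ i := fun h => hi (h ▸ l.2)
    simp [res, extAsg, hl]
  · rintro ⟨rfl, rfl⟩
    funext l
    by_cases hl : l.1 = i
    · simp only [extAsg, hl, dif_pos]
      congr 1
      exact Subtype.ext hl.symm
    · simp [res, extAsg, hl]

theorem card_insert_insert_le {k : ℕ} (hS : S.card + 2 ≤ k) (i j : Fin n) :
    (insert i (insert j S)).card ≤ k := by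
  have h₁ := Finset.card_insert_le i (insert j S)
  have h₂ := Finset.card_insert_le j S
  omega

end Assignments

namespace SAFamily

variable {n k : ℕ} (F : SAFamily n k) {S T U : Finset (Fin n)} {i j : Fin n}

theorem fiberSum_res (h : S ⊆ T) (hT : T.card ≤ k) : fiberSum (res h) (F.μ T) = F.μ S := by
  have hinter : ∀ R, R = S ∩ T → ∀ (hRS : R ⊆ S) (hRT : R ⊆ T) (z : Asg R),
      margTo (F.μ S) hRS z = margTo (F.μ T) hRT z := by
    rintro _ rfl _ _ z
    exact F.consistent S T (by rwa [Finset.union_eq_right.2 h]) z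
  funext z
  exact (hinter S (Finset.inter_eq_left.2 h).symm subset_rfl h z).symm.trans <|
    Finset.sum_ite_eq' Finset.univ z (F.μ S) |>.trans (if_pos (Finset.mem_univ z))

theorem sum_mul_res (h : S ⊆ T) (hT : T.card ≤ k) (f : Asg S → ℝ) :
    ∑ z, F.μ T z * f (res h z) = ∑ y, F.μ S y * f y := by
  rw [← sum_fiberSum_mul, F.fiberSum_res h hT]

theorem fiberMean_res (hSU : S ⊆ U) (hUT : U ⊆ T) (hT : T.card ≤ k) (f : Asg U → ℝ) :
    fiberMean (F.μ T) (res (hSU.trans hUT)) (fun z => f (res hUT z)) =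
      fiberMean (F.μ U) (res hSU) f := by
  rw [← F.fiberSum_res hUT hT]
  exact fiberMean_comp (F.μ T) (res hUT) (res hSU) f

theorem condExp1_eq_fiberMean (hST : S ⊆ T) (hi : i ∈ T) (hT : T.card ≤ k) (y : Asg S) :
    condExp1 F S y i = fiberMean (F.μ T) (res hST) (spin hi) y := by
  have hU : S ∪ {i} ⊆ T := Finset.union_subset hST (Finset.singleton_subset_iff.2 hi)
  calc condExp1 F S y i
      = fiberMean (F.μ (S ∪ {i})) (res Finset.subset_union_left) (spin (by simp)) y := by
        rw [fiberMean, F.fiberSum_res _ ((Finset.card_le_card hU).trans hT)]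
        rfl
    _ = fiberMean (F.μ T) (res hST) (spin hi) y :=
        (congrFun (F.fiberMean_res Finset.subset_union_left hU hT _) y).symm

theorem condExp2_eq_fiberMean (hST : S ⊆ T) (hi : i ∈ T) (hj : j ∈ T) (hT : T.card ≤ k)
    (y : Asg S) :
    condExp2 F S y i j = fiberMean (F.μ T) (res hST) (fun z => spin hi z * spin hj z) y := by
  have hU : S ∪ {i, j} ⊆ T := Finset.union_subset hST (by simp [Finset.insert_subset_iff, hi, hj])
  calc condExp2 F S y i j
      = fiberMean (F.μ (S ∪ {i, j})) (res Finset.subset_union_left)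
          (fun z => spin (i := i) (by simp) z * spin (i := j) (by simp) z) y := by
        rw [fiberMean, F.fiberSum_res _ ((Finset.card_le_card hU).trans hT)]
        simp only [← mul_assoc]
        rfl
    _ = fiberMean (F.μ T) (res hST) (fun z => spin hi z * spin hj z) y :=
        (congrFun (F.fiberMean_res Finset.subset_union_left hU hT _) y).symm

/-- The covariance matrix of the spins conditioned on the assignment `y` to `S`. -/
def localCov (S : Finset (Fin n)) (y : Asg S) : Matrix (Fin n) (Fin n) ℝ :=
  Matrix.of fun i j => condExp2 F S y i j - condExp1 F S y i * condExp1 F S y j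

/-- The matrix of averaged squared conditional covariances given `S`. -/
def sqCov (S : Finset (Fin n)) : Matrix (Fin n) (Fin n) ℝ :=
  ∑ y, F.μ S y • (F.localCov S y).hadamard (F.localCov S y)

/-- The averaged absolute conditional covariance of the coordinates `i, j` given `S`. -/
def absCov (S : Finset (Fin n)) (i j : Fin n) : ℝ := ∑ y, F.μ S y * |F.localCov S y i j|

/-- The potential `Σ_i E[E[x_i | x_S]²]` of the greedy choice of the conditioning set. -/
def potential (S : Finset (Fin n)) : ℝ := ∑ i, ∑ y, F.μ S y * condExp1 F S y i ^ 2

theorem sqCov_apply (S : Finset (Fin n)) (i j : Fin n) :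
    F.sqCov S i j = ∑ y, F.μ S y * F.localCov S y i j ^ 2 := by
  simp [sqCov, Matrix.sum_apply, sq]

theorem localCov_eq_fiberCov (hST : S ⊆ T) (hi : i ∈ T) (hj : j ∈ T) (hT : T.card ≤ k)
    (y : Asg S) : F.localCov S y i j = fiberCov (F.μ T) (res hST) (spin hi) (spin hj) y := by
  rw [localCov, Matrix.of_apply, F.condExp1_eq_fiberMean hST hi hT,
    F.condExp1_eq_fiberMean hST hj hT, F.condExp2_eq_fiberMean hST hi hj hT, fiberCov]

variable {F}

theorem sqCov_nonneg (hS : S.card ≤ k) (i j : Fin n) : 0 ≤ F.sqCov S i j := by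
  rw [sqCov_apply]
  exact Finset.sum_nonneg fun y _ => mul_nonneg (F.nonneg S hS y) (sq_nonneg _)

theorem absCov_nonneg (hS : S.card ≤ k) (i j : Fin n) : 0 ≤ F.absCov S i j :=
  Finset.sum_nonneg fun y _ => mul_nonneg (F.nonneg S hS y) (abs_nonneg _)

theorem absCov_sq_le (hS : S.card ≤ k) (i j : Fin n) : F.absCov S i j ^ 2 ≤ F.sqCov S i j := by
  rw [sqCov_apply, absCov]
  simpa using Real.pow_arith_mean_le_arith_mean_pow Finset.univ (F.μ S)
    (fun y => |F.localCov S y i j|) (fun y _ => F.nonneg S hS y) (F.sum_one S hS)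
    (fun y _ => abs_nonneg _) 2

theorem abs_condCov_le (hS : S.card ≤ k) (i j : Fin n) : |condCov F S i j| ≤ F.absCov S i j := by
  refine (Finset.abs_sum_le_sum_abs _ _).trans_eq (Finset.sum_congr rfl fun y _ => ?_)
  rw [abs_mul, abs_of_nonneg (F.nonneg S hS y)]
  rfl

theorem sum_mul_le_one (hS : S.card ≤ k) {f : Asg S → ℝ} (hf : ∀ y, f y ≤ 1) :
    ∑ y, F.μ S y * f y ≤ 1 :=
  (Finset.sum_le_sum fun y _ => mul_le_of_le_one_right (F.nonneg S hS y) (hf y)).trans_eq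
    (F.sum_one S hS)

theorem sqCov_self_le_one (hS : S.card + 1 ≤ k) (i : Fin n) : F.sqCov S i i ≤ 1 := by
  have hT := (Finset.card_insert_le i S).trans hS
  have hi := Finset.mem_insert_self i S
  rw [sqCov_apply]
  refine sum_mul_le_one (by omega) fun y => ?_
  rw [F.localCov_eq_fiberCov (Finset.subset_insert i S) hi hi hT]
  have hspin : ∀ z, spin hi z * spin hi z ≤ 1 := fun z => (spin_mul_self hi z).le
  exact (fiberCov_sq_le (F.nonneg _ hT) _ hspin y).trans
    (fiberCov_self_le_one (F.nonneg _ hT) hspin y)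

theorem condExp1_sq_le_one (hS : S.card + 1 ≤ k) (y : Asg S) (i : Fin n) :
    condExp1 F S y i ^ 2 ≤ 1 := by
  have hT := (Finset.card_insert_le i S).trans hS
  have hi := Finset.mem_insert_self i S
  rw [F.condExp1_eq_fiberMean (Finset.subset_insert i S) hi hT, sq]
  have hle := fiberMean_le_one (r := res (Finset.subset_insert i S)) (F.nonneg _ hT)
    (fun z => (spin_mul_self hi z).le) y
  have hcov := fiberCov_self_nonneg (r := res (Finset.subset_insert i S)) (F.nonneg _ hT)
    (spin hi) y
  rw [fiberCov] at hcov
  linarith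

theorem potential_nonneg (hS : S.card ≤ k) : 0 ≤ F.potential S :=
  Finset.sum_nonneg fun _ _ => Finset.sum_nonneg fun y _ =>
    mul_nonneg (F.nonneg S hS y) (sq_nonneg _)

theorem potential_le (hS : S.card + 1 ≤ k) : F.potential S ≤ n := by
  simpa [potential] using Finset.sum_le_card_nsmul Finset.univ _ 1 fun i _ =>
    sum_mul_le_one (by omega) fun y => condExp1_sq_le_one hS y i

theorem potential_add_sum_sqCov_le (hS : S.card + 2 ≤ k) (j : Fin n) :
    F.potential S + ∑ i, F.sqCov S i j ≤ F.potential (insert j S) := by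
  rw [potential, potential, ← Finset.sum_add_distrib]
  refine Finset.sum_le_sum fun i _ => ?_
  have hT := card_insert_insert_le hS i j
  have hsub : insert j S ⊆ insert i (insert j S) := Finset.subset_insert _ _
  have hi := Finset.mem_insert_self i (insert j S)
  have hj := Finset.mem_insert_self j S
  have hST := (Finset.subset_insert j S).trans hsub
  simp only [sqCov_apply, ← Finset.sum_add_distrib, ← mul_add,
    F.condExp1_eq_fiberMean hST hi hT, F.condExp1_eq_fiberMean hsub hi hT,
    F.localCov_eq_fiberCov hST hi (hsub hj) hT]
  rw [← F.fiberSum_res hST hT, ← F.fiberSum_res hsub hT]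
  exact sum_fiberMean_sq_add_fiberCov_sq_le (F.nonneg _ hT) (res hsub)
    (res (Finset.subset_insert j S)) (spin hi) (Z := spin hj) fun z => (spin_mul_self hj z).le

theorem sq_sum_mul_absCov_le (hS : S.card ≤ k) {A : Matrix (Fin n) (Fin n) ℝ}
    (hA0 : ∀ i j, 0 ≤ A i j) (hA1 : ∀ i, ∑ j, A i j ≤ 1) :
    (∑ i, ∑ j, A i j * F.absCov S i j) ^ 2 ≤ n * ∑ i, ∑ j, A i j * F.sqCov S i j := by
  have hsum : ∑ q : Fin n × Fin n, A q.1 q.2 ≤ n := by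
    rw [Fintype.sum_prod_type]
    simpa using Finset.sum_le_card_nsmul Finset.univ _ 1 fun i _ => hA1 i
  simp only [← Fintype.sum_prod_type']
  have hterm : ∀ q : Fin n × Fin n, 0 ≤ A q.1 q.2 * F.sqCov S q.1 q.2 := fun q =>
    mul_nonneg (hA0 _ _) (sqCov_nonneg hS _ _)
  calc (∑ q : Fin n × Fin n, A q.1 q.2 * F.absCov S q.1 q.2) ^ 2
      ≤ (∑ q : Fin n × Fin n, A q.1 q.2) * ∑ q : Fin n × Fin n, A q.1 q.2 * F.sqCov S q.1 q.2 :=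
        Finset.sum_sq_le_sum_mul_sum_of_sq_le_mul _ (fun q _ => hA0 _ _) (fun q _ => hterm q)
          fun q _ => by
            rw [mul_pow, sq, mul_assoc]
            gcongr
            exacts [hA0 _ _, hA0 _ _, absCov_sq_le hS _ _]
    _ ≤ n * ∑ q : Fin n × Fin n, A q.1 q.2 * F.sqCov S q.1 q.2 :=
        mul_le_mul_of_nonneg_right hsum (Finset.sum_nonneg fun q _ => hterm q)

theorem trace_sqCov_le (hS : S.card + 1 ≤ k) : (F.sqCov S).trace ≤ n := by
  simpa [Matrix.trace] using
    Finset.sum_le_card_nsmul Finset.univ _ 1 fun i _ => sqCov_self_le_one hS i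

variable (F)

theorem pairExp_self (hk : 2 ≤ k) (i : Fin n) : pairExp F i i = 1 := by
  rw [← F.sum_one {i, i} (Finset.card_le_two.trans hk), pairExp]
  exact Finset.sum_congr rfl fun y _ => by rw [mul_assoc, coe_mul_self_eq_one, mul_one]

theorem pairExp_eq_sum_condExp2 (hS : S.card + 2 ≤ k) (i j : Fin n) :
    pairExp F i j = ∑ y, F.μ S y * condExp2 F S y i j := by
  have hT := card_insert_insert_le hS i j
  have hST : S ⊆ insert i (insert j S) := by grind
  have hi : i ∈ insert i (insert j S) := by simp
  have hj : j ∈ insert i (insert j S) := by simp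
  have hpair : ({i, j} : Finset (Fin n)) ⊆ insert i (insert j S) := by grind
  calc pairExp F i j
      = ∑ z, F.μ (insert i (insert j S)) z * (spin hi z * spin hj z) := by
        rw [pairExp]
        simp only [mul_assoc]
        exact (F.sum_mul_res hpair hT fun y => (y ⟨i, by simp⟩ : ℝ) * y ⟨j, by simp⟩).symm
    _ = ∑ y, F.μ S y * condExp2 F S y i j := by
        simp only [F.condExp2_eq_fiberMean hST hi hj hT]
        rw [← F.fiberSum_res hST hT]
        simpa using (sum_fiberSum_mul_fiberMean (F.nonneg _ hT) (r := res hST)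
          (fun z => spin hi z * spin hj z) fun _ => 1).symm

end SAFamily

section Energy

variable {n : ℕ}

/-- The exponent `Σ_{i,j} J i j · x i · x j` of the Ising weight of a configuration. -/
def isingEnergy (J : Fin n → Fin n → ℝ) (x : Cube n) : ℝ :=
  ∑ i, ∑ j, J i j * (x i : ℝ) * (x j : ℝ)

theorem sum_mul_isingEnergy (J : Fin n → Fin n → ℝ) (p : Cube n → ℝ) :
    ∑ x, p x * isingEnergy J x = ∑ i, ∑ j, J i j * ∑ x, p x * ((x i : ℝ) * (x j : ℝ)) := by
  simp only [isingEnergy, Finset.mul_sum]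
  rw [Finset.sum_comm]
  refine Finset.sum_congr rfl fun i _ => ?_
  rw [Finset.sum_comm]
  exact Finset.sum_congr rfl fun j _ => Finset.sum_congr rfl fun x _ => by ring

end Energy

namespace SAFamily

variable {n k : ℕ} (F : SAFamily n k) {S : Finset (Fin n)} {i j : Fin n}

/-- The conditional law of the coordinate `i` given the assignment `y` to `S`. It is also
meaningful for `i ∈ S`, where it is the point mass at `y i`. -/
def condLaw (S : Finset (Fin n)) (y : Asg S) (i : Fin n) : ↥B → ℝ :=
  fiberLaw (F.μ (insert i S)) (res (Finset.subset_insert i S))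
    (fun z => z ⟨i, Finset.mem_insert_self i S⟩) y

/-- The augmented entropy `H(μ_S) + Σ_{i ∉ S} H(μ_i | μ_S)`, minimized by `pseudoEnt`. -/
def augEnt (S : Finset (Fin n)) : ℝ := ent (F.μ S) + ∑ i ∈ Sᶜ, condEnt F S i

/-- The rounded distribution on the cube: sample `x_S` from `μ_S`, then the coordinates
independently from their conditional laws given `x_S`. -/
def roundedDist (S : Finset (Fin n)) (x : Cube n) : ℝ :=
  F.μ S (S.restrict x) * ∏ i, F.condLaw S (S.restrict x) i (x i)

theorem pseudoEnt_le_augEnt {t : ℕ} (hS : S.card ≤ t) : pseudoEnt F t ≤ F.augEnt S :=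
  Finset.inf'_le _ (by simpa using hS)

theorem fiberSum_insert_ne_zero (hS : S.card + 1 ≤ k) {y : Asg S} (hy : F.μ S y ≠ 0)
    (i : Fin n) : fiberSum (res (Finset.subset_insert i S)) (F.μ (insert i S)) y ≠ 0 := by
  rwa [F.fiberSum_res _ ((Finset.card_insert_le i S).trans hS)]

theorem condLaw_nonneg (hS : S.card + 1 ≤ k) (y : Asg S) (i : Fin n) (a : ↥B) :
    0 ≤ F.condLaw S y i a :=
  fiberLaw_nonneg (F.nonneg _ ((Finset.card_insert_le i S).trans hS)) _ y a

theorem sum_condLaw (hS : S.card + 1 ≤ k) {y : Asg S} (hy : F.μ S y ≠ 0) (i : Fin n) :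
    ∑ a, F.condLaw S y i a = 1 :=
  sum_fiberLaw _ (F.fiberSum_insert_ne_zero hS hy i)

theorem sum_condLaw_mul_coe (hS : S.card + 1 ≤ k) (y : Asg S) (i : Fin n) :
    ∑ a, F.condLaw S y i a * (a : ℝ) = condExp1 F S y i := by
  rw [F.condExp1_eq_fiberMean (Finset.subset_insert i S) (Finset.mem_insert_self i S)
    ((Finset.card_insert_le i S).trans hS)]
  exact sum_fiberLaw_mul _ _ _ _ _

theorem condLaw_of_mem (hS : S.card + 1 ≤ k) {y : Asg S} (hy : F.μ S y ≠ 0) (hi : i ∈ S)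
    (a : ↥B) : F.condLaw S y i a = if y ⟨i, hi⟩ = a then 1 else 0 :=
  fiberLaw_comp_self (fun y : Asg S => y ⟨i, hi⟩) (F.fiberSum_insert_ne_zero hS hy i) a

theorem condLaw_of_notMem (hS : S.card + 1 ≤ k) (y : Asg S) (hi : i ∉ S) (a : ↥B) :
    F.condLaw S y i a = F.μ (insert i S) (extAsg i y a) / F.μ S y := by
  rw [condLaw, fiberLaw, fiberMean, F.fiberSum_res _ ((Finset.card_insert_le i S).trans hS)]
  simp only [fiberSum, mul_ite, mul_one, mul_zero, ← ite_and, ← extAsg_eq_iff hi,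
    Finset.sum_ite_eq, Finset.mem_univ, if_true]

theorem ent_condLaw_of_mem (hS : S.card + 1 ≤ k) {y : Asg S} (hy : F.μ S y ≠ 0) (hi : i ∈ S) :
    ent (F.condLaw S y i) = 0 := by
  simp [ent, F.condLaw_of_mem hS hy hi]

theorem sum_condEnt_compl (hS : S.card + 1 ≤ k) :
    ∑ i ∈ Sᶜ, condEnt F S i = ∑ i, ∑ y, F.μ S y * ent (F.condLaw S y i) := by
  rw [← Finset.sum_subset (Finset.subset_univ Sᶜ)]
  · refine Finset.sum_congr rfl fun i hi => Finset.sum_congr rfl fun y _ => ?_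
    rw [funext (F.condLaw_of_notMem hS y (Finset.mem_compl.1 hi))]
  · refine fun i _ hi => Finset.sum_eq_zero fun y _ => ?_
    by_cases hy : F.μ S y = 0
    · rw [hy, zero_mul]
    · rw [F.ent_condLaw_of_mem hS hy (by simpa using hi), mul_zero]

variable {F}

theorem roundedDist_nonneg (hS : S.card + 1 ≤ k) (x : Cube n) : 0 ≤ F.roundedDist S x :=
  mul_nonneg (F.nonneg S (by omega) _) (Finset.prod_nonneg fun i _ => F.condLaw_nonneg hS _ i _)

theorem sum_roundedDist_mul (hS : S.card + 1 ≤ k) (g : Asg S → Cube n → ℝ) :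
    ∑ x, F.roundedDist S x * g (S.restrict x) x =
      ∑ y, F.μ S y * ∑ x : Cube n, (∏ i, F.condLaw S y i (x i)) * g y x := by
  have hzero : ∀ y (x : Cube n), y ≠ S.restrict x →
      F.μ S y * ((∏ i, F.condLaw S y i (x i)) * g y x) = 0 := by
    intro y x hyx
    by_cases hy : F.μ S y = 0
    · rw [hy, zero_mul]
    obtain ⟨i, hi⟩ := Function.ne_iff.1 hyx
    have hlaw : F.condLaw S y i (x i) = 0 := (F.condLaw_of_mem hS hy i.2 _).trans (if_neg hi)
    rw [Finset.prod_eq_zero (Finset.mem_univ i.1) hlaw, zero_mul, mul_zero]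
  simp only [Finset.mul_sum]
  rw [Finset.sum_comm]
  refine Finset.sum_congr rfl fun x _ => ?_
  rw [Finset.sum_eq_single (S.restrict x) (fun y _ hy => hzero y x hy) (by simp), roundedDist,
    mul_assoc]

theorem sum_roundedDist_mul_prod (hS : S.card + 1 ≤ k) (s : Finset (Fin n))
    (g : Asg S → Fin n → ↥B → ℝ) :
    ∑ x, F.roundedDist S x * ∏ i ∈ s, g (S.restrict x) i (x i) =
      ∑ y, F.μ S y * ∏ i ∈ s, ∑ a, F.condLaw S y i a * g y i a := by
  rw [sum_roundedDist_mul hS fun y x => ∏ i ∈ s, g y i (x i)]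
  refine Finset.sum_congr rfl fun y _ => ?_
  by_cases hy : F.μ S y = 0
  · rw [hy, zero_mul, zero_mul]
  · rw [sum_prod_mul_prod (F.sum_condLaw hS hy)]

theorem sum_roundedDist_mul_restrict (hS : S.card + 1 ≤ k) (g : Asg S → ℝ) :
    ∑ x, F.roundedDist S x * g (S.restrict x) = ∑ y, F.μ S y * g y := by
  rw [sum_roundedDist_mul hS fun y _ => g y]
  refine Finset.sum_congr rfl fun y _ => ?_
  by_cases hy : F.μ S y = 0
  · rw [hy, zero_mul, zero_mul]
  · have hprod := sum_prod_mul_prod (F.sum_condLaw hS hy) ∅ fun _ _ => 1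
    simp only [Finset.prod_empty, mul_one] at hprod
    rw [← Finset.sum_mul, hprod, one_mul]

theorem sum_roundedDist (hS : S.card + 1 ≤ k) : ∑ x, F.roundedDist S x = 1 := by
  simpa [F.sum_one S (by omega)] using sum_roundedDist_mul_restrict hS (F := F) fun _ => 1

theorem sum_roundedDist_mul_mul (hS : S.card + 1 ≤ k) (hij : i ≠ j) :
    ∑ x, F.roundedDist S x * ((x i : ℝ) * (x j : ℝ)) =
      ∑ y, F.μ S y * (condExp1 F S y i * condExp1 F S y j) := by
  simpa only [Finset.prod_pair hij, F.sum_condLaw_mul_coe hS] using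
    sum_roundedDist_mul_prod (F := F) hS {i, j} fun _ _ a => (a : ℝ)

/-- The cross-entropy relative to the rounded distribution only sees the marginal on `S` and the
conditional laws given `S`. -/
theorem sum_mul_log_roundedDist (hS : S.card + 1 ≤ k) {p : Cube n → ℝ}
    (hmarg : ∀ g : Asg S → ℝ, ∑ x, p x * g (S.restrict x) = ∑ y, F.μ S y * g y)
    (hlaw : ∀ i (g : Asg S → ↥B → ℝ), ∑ x, p x * g (S.restrict x) (x i) =
      ∑ y, F.μ S y * ∑ a, F.condLaw S y i a * g y a)
    (hp : ∀ x, p x ≠ 0 → F.roundedDist S x ≠ 0) :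
    ∑ x, p x * Real.log (F.roundedDist S x) = -F.augEnt S := by
  have hterm : ∀ x, p x * Real.log (F.roundedDist S x) = p x * Real.log (F.μ S (S.restrict x)) +
      ∑ i, p x * Real.log (F.condLaw S (S.restrict x) i (x i)) := by
    intro x
    by_cases hx : p x = 0
    · simp [hx]
    obtain ⟨hμ, hprod⟩ := mul_ne_zero_iff.1 (hp x hx)
    rw [roundedDist, Real.log_mul hμ hprod, Real.log_prod (Finset.prod_ne_zero_iff.1 hprod),
      mul_add, Finset.mul_sum]
  have hcond : ∀ i, ∑ x, p x * Real.log (F.condLaw S (S.restrict x) i (x i)) =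
      -∑ y, F.μ S y * ent (F.condLaw S y i) := fun i => by
    rw [hlaw i fun y a => Real.log (F.condLaw S y i a)]
    simp [ent]
  rw [Finset.sum_congr rfl fun x _ => hterm x, Finset.sum_add_distrib, Finset.sum_comm,
    Finset.sum_congr rfl fun i _ => hcond i, hmarg fun y => Real.log (F.μ S y),
    Finset.sum_neg_distrib, ← F.sum_condEnt_compl hS, augEnt, ent]
  ring

theorem ent_roundedDist (hS : S.card + 1 ≤ k) : ent (F.roundedDist S) = F.augEnt S := by
  rw [ent, sum_mul_log_roundedDist hS (sum_roundedDist_mul_restrict hS) (fun i g => ?_)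
    fun _ h => h, neg_neg]
  simpa using sum_roundedDist_mul_prod hS {i} fun y _ => g y

/-- For `i = j` both sides use `x_i² = 1` instead of the conditional independence. -/
theorem mul_pairExp_le (hS : S.card + 2 ≤ k) (c : ℝ) (i j : Fin n) :
    c * pairExp F i j ≤
      c * (∑ x, F.roundedDist S x * ((x i : ℝ) * (x j : ℝ))) + |c| * F.absCov S i j := by
  rcases eq_or_ne i j with rfl | hij
  · simp only [coe_mul_self_eq_one, mul_one, sum_roundedDist (by omega : S.card + 1 ≤ k),
      F.pairExp_self (by omega)]
    exact le_add_of_nonneg_right (mul_nonneg (abs_nonneg c) (absCov_nonneg (by omega) i i))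
  · have hcov : pairExp F i j = (∑ x, F.roundedDist S x * ((x i : ℝ) * (x j : ℝ))) +
        condCov F S i j := by
      rw [F.pairExp_eq_sum_condExp2 hS, sum_roundedDist_mul_mul (by omega) hij, condCov,
        ← Finset.sum_add_distrib]
      exact Finset.sum_congr rfl fun y _ => by ring
    rw [hcov, mul_add]
    refine add_le_add_right ?_ _
    calc c * condCov F S i j ≤ |c * condCov F S i j| := le_abs_self _
      _ = |c| * |condCov F S i j| := abs_mul _ _
      _ ≤ |c| * F.absCov S i j :=
        mul_le_mul_of_nonneg_left (abs_condCov_le (by omega) i j) (abs_nonneg c)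

/-- Gibbs' inequality for the rounded distribution, whose correlations are those of `F` up to
the conditional covariances. -/
theorem sum_mul_pairExp_add_augEnt_le (hS : S.card + 2 ≤ k) (J : Fin n → Fin n → ℝ) :
    (∑ i, ∑ j, J i j * pairExp F i j) + F.augEnt S ≤
      Real.log (∑ x, Real.exp (isingEnergy J x)) + ∑ i, ∑ j, |J i j| * F.absCov S i j := by
  have hgibbs := sum_mul_log_add_ent_le (w := fun x => Real.exp (isingEnergy J x))
    (roundedDist_nonneg (F := F) (by omega : S.card + 1 ≤ k)) (sum_roundedDist (by omega))
    (fun x => (Real.exp_pos _).le) fun x _ => (Real.exp_pos _).ne'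
  simp only [Real.log_exp] at hgibbs
  rw [sum_mul_isingEnergy, ent_roundedDist (by omega)] at hgibbs
  have hpair : ∑ i, ∑ j, J i j * pairExp F i j ≤
      ∑ i, ∑ j, (J i j * (∑ x, F.roundedDist S x * ((x i : ℝ) * (x j : ℝ))) +
        |J i j| * F.absCov S i j) :=
    Finset.sum_le_sum fun i _ => Finset.sum_le_sum fun j _ => mul_pairExp_le hS (J i j) i j
  simp only [Finset.sum_add_distrib] at hpair
  linarith

end SAFamily

namespace LasserreSol

variable {n k : ℕ} (L : LasserreSol n k) {S T : Finset (Fin n)}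

/-- The vector `Σ_α f(α) v_{S,α}` representing a function `f` of the spins in `S`. -/
def funVec (S : Finset (Fin n)) (f : Asg S → ℝ) : EuclideanSpace ℝ (Fin L.dim) :=
  ∑ α, f α • L.vec S α

theorem inner_funVec (h : (S ∪ T).card ≤ k) (f : Asg S → ℝ) (g : Asg T → ℝ) :
    ⟪L.funVec S f, L.funVec T g⟫ = ∑ z, L.μ (S ∪ T) z *
      (f (res Finset.subset_union_left z) * g (res Finset.subset_union_right z)) := by
  simp only [funVec, sum_inner, inner_sum, real_inner_smul_left, real_inner_smul_right,
    L.inner_eq S T h, Finset.mul_sum]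
  rw [Finset.sum_congr rfl fun α _ => Finset.sum_comm, Finset.sum_comm]
  refine Finset.sum_congr rfl fun z _ => ?_
  simp only [ite_and, mul_ite, mul_zero, Finset.sum_ite_eq, Finset.mem_univ, if_true]
  ring

theorem localCov_posSemidef (hS : S.card + 2 ≤ k) (y : Asg S) :
    (L.localCov S y).PosSemidef := by
  let w (i : Fin n) := L.funVec (insert i S) fun z =>
    if res (Finset.subset_insert i S) z = y
    then spin (Finset.mem_insert_self i S) z - condExp1 L.toSAFamily S y i else 0
  suffices h : L.localCov S y = (L.μ S y)⁻¹ • Matrix.gram ℝ w by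
    rw [h]
    exact (Matrix.posSemidef_gram ℝ w).smul (inv_nonneg.2 (L.nonneg S (by omega) y))
  ext i j
  have hT : (insert i S ∪ insert j S).card ≤ k :=
    (Finset.card_le_card (by grind)).trans (card_insert_insert_le hS i j)
  have hST : S ⊆ insert i S ∪ insert j S := by grind
  have hi : i ∈ insert i S ∪ insert j S := by simp
  have hj : j ∈ insert i S ∪ insert j S := by simp
  rw [L.localCov_eq_fiberCov hST hi hj hT, ← fiberMean_sub_mul_sub, fiberMean,
    ← L.condExp1_eq_fiberMean hST hi hT, ← L.condExp1_eq_fiberMean hST hj hT,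
    L.fiberSum_res hST hT, Matrix.smul_apply, Matrix.gram_apply, L.inner_funVec hT, smul_eq_mul,
    div_eq_inv_mul, fiberSum]
  congr 1
  refine Finset.sum_congr rfl fun z _ => ?_
  change _ = L.μ _ z * ((if res hST z = y then spin hi z - _ else 0) *
    if res hST z = y then spin hj z - _ else 0)
  split_ifs <;> simp

theorem sqCov_posSemidef (hS : S.card + 2 ≤ k) : (L.sqCov S).PosSemidef :=
  Matrix.posSemidef_sum _ fun y _ =>
    ((L.localCov_posSemidef hS y).hadamard (L.localCov_posSemidef hS y)).smul
      (L.nonneg S (by omega) y)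

variable {A : Matrix (Fin n) (Fin n) ℝ}

theorem exists_lt_thresholdRank_mul_potential_insert (hS : S.card + 2 ≤ k) (hA : A.IsHermitian)
    (hA0 : ∀ i j, 0 ≤ A i j) (hA1 : ∀ i, ∑ j, A i j ≤ 1) {ε τ : ℝ} (hε : 0 ≤ ε) (hτ : 0 ≤ τ)
    (h : ε * n < ∑ i, ∑ j, A i j * L.absCov S i j) :
    ∃ j, thresholdRank hA τ * L.potential S + (ε ^ 2 - τ) * n <
      thresholdRank hA τ * L.potential (insert j S) := by
  rcases Nat.eq_zero_or_pos n with rfl | hn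
  · simp at h
  have : Nonempty (Fin n) := ⟨⟨0, hn⟩⟩
  have hN := L.sqCov_posSemidef hS
  have hsymm : ∀ i j, L.sqCov S i j = L.sqCov S j i := fun i j => hN.1.apply j i
  obtain ⟨j, hj⟩ := Finite.exists_max fun j => ∑ i, L.sqCov S i j
  have htrace : (A * L.sqCov S).trace = ∑ i, ∑ j, A i j * L.sqCov S i j := by
    simp only [Matrix.trace, Matrix.diag, Matrix.mul_apply, hsymm]
  have hlower : ε ^ 2 * n < (A * L.sqCov S).trace := by
    refine lt_of_mul_lt_mul_left ?_ (Nat.cast_nonneg (α := ℝ) n)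
    calc n * (ε ^ 2 * n) = (ε * n) ^ 2 := by ring
      _ < (∑ i, ∑ j, A i j * L.absCov S i j) ^ 2 :=
        pow_lt_pow_left₀ h (by positivity) two_ne_zero
      _ ≤ n * (A * L.sqCov S).trace :=
        htrace ▸ SAFamily.sq_sum_mul_absCov_le (by omega) hA0 hA1
  have hupper : (A * L.sqCov S).trace ≤
      thresholdRank hA τ * ∑ i, L.sqCov S i j + τ * n :=
    (trace_mul_le_card_mul_add hA hA0 hA1 hN (fun i j => SAFamily.sqCov_nonneg (by omega) i j)
      (fun i => by simpa only [hsymm i] using hj i) hτ).trans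
      (add_le_add_right (mul_le_mul_of_nonneg_left (SAFamily.trace_sqCov_le (by omega)) hτ) _)
  have hgain := mul_le_mul_of_nonneg_left
    (SAFamily.potential_add_sum_sqCov_le (F := L.toSAFamily) hS j)
    (Nat.cast_nonneg (α := ℝ) (thresholdRank hA τ))
  exact ⟨j, by linarith⟩

theorem exists_card_le_sum_mul_absCov_le (hA : A.IsHermitian)
    (hA0 : ∀ i j, 0 ≤ A i j) (hA1 : ∀ i, ∑ j, A i j ≤ 1) {ε τ : ℝ} (hε : 0 ≤ ε) (hτ : 0 ≤ τ)
    {t : ℕ} (ht : thresholdRank hA τ ≤ (t + 1) * (ε ^ 2 - τ)) (hk : t + 2 ≤ k) :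
    ∃ S : Finset (Fin n), S.card ≤ t ∧ ∑ i, ∑ j, A i j * L.absCov S i j ≤ ε * n :=
  exists_card_le_of_potential (Φ := fun S => thresholdRank hA τ * L.potential S)
    (mul_nonneg (Nat.cast_nonneg _) (SAFamily.potential_nonneg (by simp)))
    (fun S hS => (mul_le_mul ht (SAFamily.potential_le (by omega))
      (SAFamily.potential_nonneg (by omega)) ((Nat.cast_nonneg _).trans ht)).trans_eq
      (mul_assoc _ _ _))
    fun S hS h => L.exists_lt_thresholdRank_mul_potential_insert (by omega) hA hA0 hA1 hε hτ
      (not_le.1 h)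

end LasserreSol

section TrueDistribution

variable {n : ℕ} {p : Cube n → ℝ} (hp : ∀ x, 0 ≤ p x) (hp1 : ∑ x, p x = 1) (k : ℕ)

theorem fiberSum_res_restrict {S T : Finset (Fin n)} (h : S ⊆ T) (p : Cube n → ℝ) :
    fiberSum (res h) (fiberSum T.restrict p) = fiberSum S.restrict p := by
  rw [← fiberSum_comp]
  rfl

/-- The marginals of a probability distribution on the cube. -/
def SAFamily.ofDist : SAFamily n k where
  μ S := fiberSum S.restrict p
  nonneg _ _ := fiberSum_nonneg hp
  sum_one S _ := by simpa [hp1] using sum_fiberSum_mul S.restrict p fun _ => 1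
  consistent S T _ z := by
    change fiberSum (res _) (fiberSum S.restrict p) z = fiberSum (res _) (fiberSum T.restrict p) z
    rw [fiberSum_res_restrict, fiberSum_res_restrict]

/-- The Lasserre solution of a probability distribution `p` on the cube: the coordinates of the
vectors are indexed by an enumeration of the cube, and `v_{S,α} = Σ_x 1[x_S = α] · √(p x) · e_x`. -/
def LasserreSol.ofDist : LasserreSol n k where
  toSAFamily := SAFamily.ofDist hp hp1 k
  dim := Fintype.card (Cube n)
  vec S α := WithLp.toLp 2 fun l => if S.restrict ((Fintype.equivFin (Cube n)).symm l) = α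
    then √(p ((Fintype.equivFin (Cube n)).symm l)) else 0
  inner_eq S T _ α β := by
    rw [PiLp.inner_apply, ← Equiv.sum_comp (Fintype.equivFin (Cube n))]
    calc _ = ∑ x, p x * if S.restrict x = α ∧ T.restrict x = β then 1 else 0 :=
          Finset.sum_congr rfl fun x _ => by
            simp [ite_and, Real.mul_self_sqrt (hp x)]
      _ = _ := by
        refine (sum_fiberSum_mul (S ∪ T).restrict p fun z => if res Finset.subset_union_left z = α ∧
          res Finset.subset_union_right z = β then 1 else 0).symm.trans ?_
        simp only [mul_boole]
        rfl

namespace SAFamily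

theorem pairExp_ofDist (i j : Fin n) :
    pairExp (ofDist hp hp1 k) i j = ∑ x, p x * ((x i : ℝ) * (x j : ℝ)) := by
  simp only [pairExp, mul_assoc]
  exact sum_fiberSum_mul (Finset.restrict {i, j}) p fun y =>
    (y ⟨i, by simp⟩ : ℝ) * y ⟨j, by simp⟩

theorem condLaw_ofDist (S : Finset (Fin n)) (y : Asg S) (i : Fin n) (a : ↥B) :
    (ofDist hp hp1 k).condLaw S y i a = fiberLaw p S.restrict (fun x => x i) y a :=
  (congrFun (fiberMean_comp p (insert i S).restrict (res (Finset.subset_insert i S))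
    fun z => if z ⟨i, Finset.mem_insert_self i S⟩ = a then 1 else 0) y).symm

theorem roundedDist_ofDist_ne_zero (S : Finset (Fin n)) {x : Cube n} (hx : p x ≠ 0) :
    (ofDist hp hp1 k).roundedDist S x ≠ 0 := by
  refine mul_ne_zero (mt (eq_zero_of_fiberSum_eq_zero hp) hx)
    (Finset.prod_ne_zero_iff.2 fun i _ => ?_)
  rw [condLaw_ofDist]
  exact fiberLaw_ne_zero hp (fun x => x i) hx

variable {k}

/-- Gibbs' inequality for `p` against its own rounding. -/
theorem ent_le_augEnt_ofDist {S : Finset (Fin n)} (hS : S.card + 1 ≤ k) :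
    ent p ≤ (ofDist hp hp1 k).augEnt S := by
  have hcross := sum_mul_log_roundedDist (F := ofDist hp hp1 k) hS (p := p)
    (fun g => (sum_fiberSum_mul S.restrict p g).symm)
    (fun i g => by
      simp only [condLaw_ofDist]
      exact (sum_fiberSum_mul_sum_fiberLaw_mul hp (fun x => x i) g).symm)
    fun x => roundedDist_ofDist_ne_zero hp hp1 k S
  have hgibbs := sum_mul_log_add_ent_le hp hp1 (roundedDist_nonneg hS)
    fun x => roundedDist_ofDist_ne_zero hp hp1 k S
  rw [hcross, sum_roundedDist hS, Real.log_one] at hgibbs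
  linarith

theorem ent_le_pseudoEnt_ofDist {t : ℕ} (ht : t + 1 ≤ k) :
    ent p ≤ pseudoEnt (ofDist hp hp1 k) t :=
  Finset.le_inf' _ _ fun S hS => ent_le_augEnt_ofDist hp hp1 <| by
    have := (Finset.mem_filter.1 hS).2
    omega

end SAFamily

end TrueDistribution

section GibbsMeasure

variable {ι : Type*} [Fintype ι] (E : ι → ℝ)

/-- The Gibbs distribution with density proportional to `exp E`, where equality holds in Gibbs'
variational inequality. -/
def gibbsDist (i : ι) : ℝ := Real.exp (E i) / ∑ j, Real.exp (E j)

theorem gibbsDist_nonneg (i : ι) : 0 ≤ gibbsDist E i :=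
  div_nonneg (Real.exp_pos _).le (Finset.sum_nonneg fun _ _ => (Real.exp_pos _).le)

variable [Nonempty ι]

theorem sum_exp_pos : 0 < ∑ i, Real.exp (E i) :=
  Finset.sum_pos (fun _ _ => Real.exp_pos _) Finset.univ_nonempty

theorem sum_gibbsDist : ∑ i, gibbsDist E i = 1 := by
  simp only [gibbsDist, ← Finset.sum_div, div_self (sum_exp_pos E).ne']

theorem sum_gibbsDist_mul_add_ent :
    ∑ i, gibbsDist E i * E i + ent (gibbsDist E) = Real.log (∑ i, Real.exp (E i)) := by
  have hlog : ∀ i, Real.log (gibbsDist E i) = E i - Real.log (∑ j, Real.exp (E j)) := fun i => by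
    rw [gibbsDist, Real.log_div (Real.exp_pos _).ne' (sum_exp_pos E).ne', Real.log_exp]
  simp only [ent, hlog, mul_sub, Finset.sum_sub_distrib, ← Finset.sum_mul, sum_gibbsDist]
  ring

end GibbsMeasure

section Relaxation

variable {n k t : ℕ} {J : Fin n → Fin n → ℝ}

/-- The partition function `Σ_x exp(Σ_{i,j} J i j · x i · x j)` of the Ising model `J`. -/
def partitionFunction (J : Fin n → Fin n → ℝ) : ℝ := ∑ x : Cube n, Real.exp (isingEnergy J x)

/-- The objective of the relaxation at a Lasserre solution: the energy of the model `J` plus the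
pseudo-entropy over conditioning sets of size at most `t`. -/
def LasserreSol.value (J : Fin n → Fin n → ℝ) (t : ℕ) (L : LasserreSol n k) : ℝ :=
  (∑ i, ∑ j, J i j * pairExp L.toSAFamily i j) + pseudoEnt L.toSAFamily t

theorem exists_log_partitionFunction_le_value (J : Fin n → Fin n → ℝ) (ht : t + 1 ≤ k) :
    ∃ L : LasserreSol n k, Real.log (partitionFunction J) ≤ L.value J t := by
  have : Nonempty (Cube n) := ⟨fun _ => ⟨1, by simp⟩⟩
  have hp := gibbsDist_nonneg (isingEnergy J)
  have hp1 := sum_gibbsDist (isingEnergy J)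
  refine ⟨LasserreSol.ofDist hp hp1 k, ?_⟩
  calc Real.log (partitionFunction J)
      = ∑ x, gibbsDist (isingEnergy J) x * isingEnergy J x + ent (gibbsDist (isingEnergy J)) :=
        (sum_gibbsDist_mul_add_ent (isingEnergy J)).symm
    _ = (∑ i, ∑ j, J i j * pairExp (SAFamily.ofDist hp hp1 k) i j) +
          ent (gibbsDist (isingEnergy J)) := by
        simp only [sum_mul_isingEnergy, SAFamily.pairExp_ofDist]
    _ ≤ (LasserreSol.ofDist hp hp1 k).value J t :=
        add_le_add_right (SAFamily.ent_le_pseudoEnt_ofDist hp hp1 ht) _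

variable {A : Matrix (Fin n) (Fin n) ℝ} {J' ε τ : ℝ}

theorem LasserreSol.value_le (L : LasserreSol n k) (hJ' : 0 < J')
    (hdeg : ∀ i, ∑ j, |J i j| ≤ J') (hAJ : ∀ i j, A i j = |J i j| / J') (hA : A.IsHermitian)
    (hε : 0 ≤ ε) (hτ : 0 ≤ τ) (ht : thresholdRank hA τ ≤ (t + 1) * (ε ^ 2 - τ))
    (hk : t + 2 ≤ k) :
    L.value J t ≤ Real.log (partitionFunction J) + ε * n * J' := by
  have hA0 : ∀ i j, 0 ≤ A i j := fun i j => hAJ i j ▸ div_nonneg (abs_nonneg _) hJ'.le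
  have hA1 : ∀ i, ∑ j, A i j ≤ 1 := fun i => by
    simpa only [hAJ, ← Finset.sum_div] using div_le_one_of_le₀ (hdeg i) hJ'.le
  obtain ⟨S, hSt, hS⟩ := L.exists_card_le_sum_mul_absCov_le hA hA0 hA1 hε hτ ht hk
  have habs : ∑ i, ∑ j, |J i j| * L.absCov S i j = (∑ i, ∑ j, A i j * L.absCov S i j) * J' := by
    simp only [Finset.sum_mul, hAJ]
    exact Finset.sum_congr rfl fun i _ => Finset.sum_congr rfl fun j _ => by field_simp
  calc L.value J t ≤ (∑ i, ∑ j, J i j * pairExp L.toSAFamily i j) + L.augEnt S :=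
        add_le_add_right (L.pseudoEnt_le_augEnt hSt) _
    _ ≤ Real.log (partitionFunction J) + ∑ i, ∑ j, |J i j| * L.absCov S i j :=
        SAFamily.sum_mul_pairExp_add_augEnt_le (by omega) J
    _ ≤ Real.log (partitionFunction J) + ε * n * J' := by
        rw [habs]
        gcongr

theorem low_threshold_rank_ising_Lasserre_approximation_general (hJ' : 0 < J')
    (hdeg : ∀ i, ∑ j, |J i j| ≤ J') (hAJ : ∀ i j, A i j = |J i j| / J') (hA : A.IsHermitian)
    (hε : 0 ≤ ε) (hτ : 0 ≤ τ) (ht : thresholdRank hA τ ≤ (t + 1) * (ε ^ 2 - τ))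
    (hk : t + 2 ≤ k) :
    Real.log (partitionFunction J) ≤ sSup {v | ∃ L : LasserreSol n k, v = L.value J t} ∧
      sSup {v | ∃ L : LasserreSol n k, v = L.value J t} ≤
        Real.log (partitionFunction J) + ε * n * J' := by
  obtain ⟨L, hL⟩ := exists_log_partitionFunction_le_value (k := k) J (by omega : t + 1 ≤ k)
  have hub : Real.log (partitionFunction J) + ε * n * J' ∈
      upperBounds {v | ∃ L : LasserreSol n k, v = L.value J t} := by
    rintro _ ⟨L, rfl⟩
    exact L.value_le hJ' hdeg hAJ hA hε hτ ht hk
  exact ⟨le_csSup_of_le ⟨_, hub⟩ ⟨L, rfl⟩ hL, csSup_le ⟨_, L, rfl⟩ hub⟩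

end Relaxation

/-- Main theorem, low threshold rank case: there is a universal `c > 0` such that
for any regular Ising model with adjacency matrix `A`, `ε ∈ (0,1)`, and
`t = ⌈rank(cε²)/(cε²)⌉`, the value `V` of the level-`(t+2)` Lasserre relaxation
with the augmented mean-field pseudo-entropy (at level `t`) satisfies
`log Z ≤ V ≤ log Z + ε n J'`. -/
theorem low_threshold_rank_ising_Lasserre_approximation :
    ∃ c : ℝ, 0 < c ∧
      ∀ n : ℕ, 1 ≤ n → ∀ ε : ℝ, ε ∈ Set.Ioo (0 : ℝ) 1 →
        ∀ J : Fin n → Fin n → ℝ, (∀ i j : Fin n, J i j = J j i) →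
        ∀ J' : ℝ, 0 < J' → (∀ i : Fin n, ∑ j : Fin n, |J i j| = J') →
        ∀ A : Matrix (Fin n) (Fin n) ℝ, A = (fun i j : Fin n => |J i j| / J') →
        ∀ hA : A.IsHermitian,
        ∀ t : ℕ, t = ⌈(thresholdRank hA (c * ε ^ 2) : ℝ) / (c * ε ^ 2)⌉₊ →
        ∀ Z : ℝ, Z = ∑ x : Cube n,
            Real.exp (∑ i : Fin n, ∑ j : Fin n, J i j * (x i : ℝ) * (x j : ℝ)) →
        ∀ V : ℝ, V = sSup {v : ℝ | ∃ L : LasserreSol n (t + 2),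
            v = (∑ i : Fin n, ∑ j : Fin n, J i j * pairExp L.toSAFamily i j)
                  + pseudoEnt L.toSAFamily t} →
        Real.log Z ≤ V ∧ V ≤ Real.log Z + ε * n * J' := by
  refine ⟨1 / 2, by norm_num, ?_⟩
  rintro n - ε ⟨hε, -⟩ J - J' hJ' hdeg A rfl hA t rfl _ rfl _ rfl
  refine low_threshold_rank_ising_Lasserre_approximation_general (τ := 1 / 2 * ε ^ 2) hJ'
    (fun i => (hdeg i).le) (fun _ _ => rfl) hA hε.le (by positivity) ?_ le_rfl
  have hτ : 0 < 1 / 2 * ε ^ 2 := by positivity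
  have hceil := (div_le_iff₀ hτ).1
    (Nat.le_ceil ((thresholdRank hA (1 / 2 * ε ^ 2) : ℝ) / (1 / 2 * ε ^ 2)))
  linarith
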